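/- Let G be a connected simple graph on n ≥ 2 vertices. Let M be the Metropolis matrix of G: M_{ij} = 1/max(d_i, d_j) if (i,j) is an edge (d_i the degree of i), M_{ii} = 1 − Σ_{j adjacent to i} 1/max(d_i, d_j), and M_{ij} = 0 otherwise; let M̃ = (I + M)/2 be the lazy Metropolis matrix. Then the second largest eigenvalue of the matrix W̄_{P^m} = (1 − 1/n)·I + (1/n)·M̃ satisfies λ_{n−1}(W̄_{P^m}) ≤ 1 − 1/(71·n³). -/

import Mathlib

open Matrix BigOperators Finset

/-- The Metropolis matrix of a graph: `M_{ij} = 1/max(d_i,d_j)` on edges,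
`M_{ii} = 1 − Σ_{j ∼ i} 1/max(d_i,d_j)`, and `0` otherwise. -/
noncomputable def metropolis {n : ℕ} (G : SimpleGraph (Fin n)) [DecidableRel G.Adj] :
    Matrix (Fin n) (Fin n) ℝ :=
  Matrix.of fun i j =>
    if G.Adj i j then 1 / ((max (G.degree i) (G.degree j) : ℕ) : ℝ)
    else if i = j then 1 - ∑ k ∈ G.neighborFinset i, 1 / ((max (G.degree i) (G.degree k) : ℕ) : ℝ)
    else 0

/-- The lazy Metropolis matrix `M̃ = (I + M)/2`. -/
noncomputable def lazyMetropolis {n : ℕ} (G : SimpleGraph (Fin n)) [DecidableRel G.Adj] :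
    Matrix (Fin n) (Fin n) ℝ :=
  (1 / 2 : ℝ) • ((1 : Matrix (Fin n) (Fin n) ℝ) + metropolis G)

/-! A graph geodesic visits each sphere around its starting point at most once, so every vertex of
the graph has at most three neighbours on it, and the degrees along it sum to at most `3n`. Hence
the resistance `∑ max (d_i, d_j)` of a geodesic for the Metropolis conductances is at most `6n`,
which by Cauchy–Schwarz bounds `(x_u - x_v)²` by `6n` times the Dirichlet energy of `x`. Averaging
over `u` and `v` gives a Poincaré inequality on mean-zero vectors, a codimension-one subspace, and
the Courant–Fischer principle converts it into a bound on the second largest eigenvalue. -/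

section CourantFischer

open Module

variable {𝕜 : Type*} [RCLike 𝕜]

section OrthonormalBasis

variable {ι E : Type*} [Fintype ι] [NormedAddCommGroup E] [InnerProductSpace 𝕜 E]
  (b : OrthonormalBasis ι 𝕜 E) {T : E →ₗ[𝕜] E} {ev : ι → ℝ}

lemma re_inner_map_self_eq_sum (hT : ∀ i, T (b i) = (ev i : 𝕜) • b i) (x : E) :
    RCLike.re (inner 𝕜 x (T x)) = ∑ i, ev i * ‖inner 𝕜 (b i) x‖ ^ 2 := by
  have hTx : T x = ∑ i, (inner 𝕜 (b i) x * ev i) • b i := by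
    conv_lhs => rw [← b.sum_repr' x]
    simp only [map_sum, map_smul, hT, smul_smul]
  rw [hTx, inner_sum, map_sum]
  refine sum_congr rfl fun i _ ↦ ?_
  rw [inner_smul_right, mul_right_comm, RCLike.re_mul_ofReal, inner_mul_symm_re_eq_norm, norm_mul,
    norm_inner_symm x, ← sq, mul_comm]

lemma inner_eq_zero_of_mem_span_image {s : Set ι} {x : E} (hx : x ∈ Submodule.span 𝕜 (b '' s))
    {i : ι} (hi : i ∉ s) : inner 𝕜 (b i) x = 0 := by
  have h := b.toBasis.mem_span_image.1 (by simpa only [b.coe_toBasis] using hx)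
  rw [← b.repr_apply_apply, ← b.coe_toBasis_repr_apply]
  exact Finsupp.notMem_support_iff.1 fun hmem ↦ hi (h hmem)

lemma card_filter_lt_add_finrank_le (hT : ∀ i, T (b i) = (ev i : 𝕜) • b i)
    {K : Submodule 𝕜 E} {c : ℝ} (hK : ∀ x ∈ K, RCLike.re (inner 𝕜 x (T x)) ≤ c * ‖x‖ ^ 2) :
    #{i | c < ev i} + finrank 𝕜 K ≤ finrank 𝕜 E := by
  set s : Finset ι := {i | c < ev i}
  have hs (i : ι) : i ∈ s ↔ c < ev i := mem_filter_univ i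
  have hcard : finrank 𝕜 (Submodule.span 𝕜 (b '' s)) = #s := by
    rw [Set.image_eq_range]
    exact (finrank_span_eq_card
      (b.orthonormal.linearIndependent.comp _ Subtype.val_injective)).trans (Fintype.card_coe s)
  have : FiniteDimensional 𝕜 E := b.toBasis.finiteDimensional_of_finite
  rw [← hcard]
  refine Submodule.finrank_add_finrank_le_of_disjoint (Submodule.disjoint_def.2 fun x hxs hxK ↦ ?_)
  have hterm_nonneg (i : ι) : 0 ≤ (ev i - c) * ‖inner 𝕜 (b i) x‖ ^ 2 := by
    by_cases hi : i ∈ s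
    · exact mul_nonneg (sub_nonneg.2 ((hs i).1 hi).le) (sq_nonneg _)
    · simp [inner_eq_zero_of_mem_span_image b hxs hi]
  have hsum : ∑ i, (ev i - c) * ‖inner 𝕜 (b i) x‖ ^ 2 ≤ 0 := by
    simp only [sub_mul, sum_sub_distrib, ← mul_sum, b.sum_sq_norm_inner_right,
      ← re_inner_map_self_eq_sum b hT, sub_nonpos, hK x hxK]
  have hterm_zero := (sum_eq_zero_iff_of_nonneg fun i _ ↦ hterm_nonneg i).1
    (hsum.antisymm (sum_nonneg fun i _ ↦ hterm_nonneg i))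
  refine InnerProductSpace.ext_inner_left_basis b.toBasis fun i ↦ ?_
  rw [b.coe_toBasis, inner_zero_right]
  by_cases hi : i ∈ s
  · have hgap : ev i - c ≠ 0 := (sub_pos.2 ((hs i).1 hi)).ne'
    simpa [hgap] using hterm_zero i (mem_univ i)
  · exact inner_eq_zero_of_mem_span_image b hxs hi

end OrthonormalBasis

lemma le_of_card_filter_lt_lt {α : Type*} [LinearOrder α] {n : ℕ} {μ : Fin n → α}
    (hμ : Monotone μ) {c : α} {i : Fin n} (h : #{j | c < μ j} < n - i) : μ i ≤ c := by
  by_contra! hi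
  refine h.not_ge ?_
  rw [← Fin.card_Ici]
  exact card_le_card fun j hj ↦ by simpa using hi.trans_le (hμ (mem_Ici.1 hj))

lemma card_filter_eigenvalues_eq {ι κ : Type*} [Fintype ι] [DecidableEq ι] [Fintype κ]
    {W : Matrix ι ι 𝕜} (hW : W.IsHermitian) {μ : κ → ℝ}
    (hμ : W.charpoly = ∏ i, (Polynomial.X - Polynomial.C (μ i : 𝕜)))
    (p : ℝ → Prop) [DecidablePred p] : #{i | p (hW.eigenvalues i)} = #{i | p (μ i)} := by
  have hroots : Multiset.map (RCLike.ofReal (K := 𝕜) ∘ hW.eigenvalues) univ.val =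
      Multiset.map (RCLike.ofReal (K := 𝕜) ∘ μ) univ.val := by
    rw [← hW.roots_charpoly_eq_eigenvalues, hμ, Polynomial.roots_prod]
    · simp
    · simp [prod_ne_zero_iff, Polynomial.X_sub_C_ne_zero]
  have hcount := congrArg (Multiset.countP fun z : 𝕜 ↦ p (RCLike.re z)) hroots
  simpa [Multiset.countP_map, Finset.card_def] using hcount

lemma eigenvalue_le_of_forall_mem_re_inner_le {n : ℕ} {W : Matrix (Fin n) (Fin n) 𝕜}
    (hW : W.IsHermitian) {μ : Fin n → ℝ} (hμ : Monotone μ)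
    (hch : W.charpoly = ∏ i, (Polynomial.X - Polynomial.C (μ i : 𝕜)))
    {K : Submodule 𝕜 (EuclideanSpace 𝕜 (Fin n))} {c : ℝ}
    (hK : ∀ x ∈ K, RCLike.re (inner 𝕜 x (W.toEuclideanLin x)) ≤ c * ‖x‖ ^ 2)
    {i : Fin n} (hi : i < finrank 𝕜 K) : μ i ≤ c := by
  have hcard := card_filter_lt_add_finrank_le hW.eigenvectorBasis (T := W.toEuclideanLin)
    (ev := hW.eigenvalues) (fun j ↦ by
      ext k
      simpa using congrFun (hW.mulVec_eigenvectorBasis j) k) hK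
  rw [card_filter_eigenvalues_eq hW hch, finrank_euclideanSpace_fin] at hcard
  exact le_of_card_filter_lt_lt hμ (by omega)

lemma eigenvalue_le_of_forall_dotProduct_eq_zero {n : ℕ} {W : Matrix (Fin n) (Fin n) ℝ}
    (hW : W.IsSymm) {μ : Fin n → ℝ} (hμ : Monotone μ)
    (hch : W.charpoly = ∏ i, (Polynomial.X - Polynomial.C (μ i))) {v : Fin n → ℝ} {c : ℝ}
    (hv : ∀ x, v ⬝ᵥ x = 0 → x ⬝ᵥ W *ᵥ x ≤ c * (x ⬝ᵥ x))
    {i : Fin n} (hi : i + 1 < n) : μ i ≤ c := by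
  let φ : EuclideanSpace ℝ (Fin n) →ₗ[ℝ] ℝ :=
    dotProductBilin ℝ ℝ v ∘ₗ (WithLp.linearEquiv 2 ℝ (Fin n → ℝ)).toLinearMap
  have hφ := φ.finrank_range_add_finrank_ker
  have hrange := φ.range.finrank_le
  rw [finrank_euclideanSpace_fin] at hφ
  rw [finrank_self] at hrange
  refine eigenvalue_le_of_forall_mem_re_inner_le (isHermitian_iff_isSymm.2 hW) hμ hch
    (K := φ.ker) (fun x hx ↦ ?_) (by omega)
  rw [EuclideanSpace.real_norm_sq_eq, EuclideanSpace.inner_eq_star_dotProduct, dotProduct_comm]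
  simpa [dotProduct, sq] using hv x.ofLp hx

end CourantFischer

section DirichletEnergy

lemma mul_sub_sq_nonneg {V R : Type*} [CommRing R] [LinearOrder R] [IsStrictOrderedRing R]
    {A : V → V → R} (hA : ∀ i j, i ≠ j → 0 ≤ A i j) (x : V → R) (i j : V) :
    0 ≤ A i j * (x i - x j) ^ 2 := by
  rcases eq_or_ne i j with rfl | hij
  · simp
  · exact mul_nonneg (hA i j hij) (sq_nonneg _)

variable {V R : Type*} [Fintype V] [CommRing R]

/-- The Dirichlet energy of `x : V → R` for the conductances `A`, summed over ordered pairs, so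
that for symmetric `A` each edge counts twice. -/
def dirichletEnergy (A : Matrix V V R) (x : V → R) : R :=
  ∑ i, ∑ j, A i j * (x i - x j) ^ 2

lemma two_mul_dotProduct_mulVec_self {A : Matrix V V R} (hA : A.IsSymm) (x : V → R) :
    2 * (x ⬝ᵥ A *ᵥ x) = 2 * ∑ i, (A *ᵥ 1) i * x i ^ 2 - dirichletEnergy A x := by
  have hcross : x ⬝ᵥ A *ᵥ x = ∑ i, ∑ j, A i j * (x i * x j) := by
    simp only [dotProduct, mulVec, mul_sum, mul_left_comm]
  have hdiag : ∑ i, (A *ᵥ 1) i * x i ^ 2 = ∑ i, ∑ j, A i j * x i ^ 2 := by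
    simp only [mulVec, dotProduct_one, sum_mul]
  have hdiag' : ∑ i, (A *ᵥ 1) i * x i ^ 2 = ∑ i, ∑ j, A i j * x j ^ 2 := by
    rw [hdiag, sum_comm]
    simp only [hA.apply]
  rw [two_mul (∑ i, _), hcross]
  nth_rw 1 [hdiag]
  rw [hdiag', dirichletEnergy, mul_sum, ← sum_add_distrib, ← sum_sub_distrib]
  refine sum_congr rfl fun i _ ↦ ?_
  rw [mul_sum, ← sum_add_distrib, ← sum_sub_distrib]
  exact sum_congr rfl fun j _ ↦ by ring

lemma sum_sum_sub_sq (x : V → R) :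
    ∑ i, ∑ j, (x i - x j) ^ 2 = 2 * (Fintype.card V * (x ⬝ᵥ x) - (∑ i, x i) ^ 2) := by
  simp only [sub_sq, sum_add_distrib, sum_sub_distrib, ← mul_sum, ← sum_mul, sum_const, card_univ,
    nsmul_eq_mul, dotProduct, ← sq]
  ring

variable [LinearOrder R] [IsStrictOrderedRing R]

lemma two_mul_dotProduct_self_le {x : V → R} (hx : ∑ i, x i = 0) {C : R}
    (hC : ∀ i j, (x i - x j) ^ 2 ≤ C) : 2 * (x ⬝ᵥ x) ≤ Fintype.card V * C := by
  rcases isEmpty_or_nonempty V with _ | _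
  · simp [dotProduct]
  refine le_of_mul_le_mul_left ?_ (Nat.cast_pos (α := R).2 (Fintype.card_pos (α := V)))
  calc (Fintype.card V : R) * (2 * (x ⬝ᵥ x))
      = ∑ i, ∑ j, (x i - x j) ^ 2 := by rw [sum_sum_sub_sq, hx]; ring
    _ ≤ ∑ _i : V, ∑ _j : V, C := sum_le_sum fun i _ ↦ sum_le_sum fun j _ ↦ hC i j
    _ = Fintype.card V * (Fintype.card V * C) := by simp

lemma dirichletEnergy_nonneg {A : Matrix V V R} (hA : ∀ i j, i ≠ j → 0 ≤ A i j) (x : V → R) :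
    0 ≤ dirichletEnergy A x :=
  sum_nonneg fun i _ ↦ sum_nonneg fun j _ ↦ mul_sub_sq_nonneg hA x i j

variable {G : SimpleGraph V} {u v : V} {p : G.Walk u v}

lemma sum_getVert_le_dirichletEnergy {A : Matrix V V R} (hA : ∀ i j, i ≠ j → 0 ≤ A i j)
    (hp : p.IsPath) (x : V → R) :
    ∑ k ∈ range p.length, A (p.getVert k) (p.getVert (k + 1)) *
      (x (p.getVert k) - x (p.getVert (k + 1))) ^ 2 ≤ dirichletEnergy A x := by
  classical
  have hinj : Set.InjOn (fun k ↦ (p.getVert k, p.getVert (k + 1))) (range p.length) :=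
    fun k hk l hl hkl ↦ hp.getVert_injOn (mem_range.1 hk).le (mem_range.1 hl).le (Prod.mk.inj hkl).1
  rw [dirichletEnergy, ← Fintype.sum_prod_type' fun i j ↦ A i j * (x i - x j) ^ 2,
    ← sum_image (f := fun q : V × V ↦ A q.1 q.2 * (x q.1 - x q.2) ^ 2) hinj]
  exact sum_le_sum_of_subset_of_nonneg (subset_univ _) fun q _ _ ↦ mul_sub_sq_nonneg hA x q.1 q.2

lemma sq_sub_le_resistance_mul_dirichletEnergy {F : Type*} [Field F] [LinearOrder F]
    [IsStrictOrderedRing F] {A : Matrix V V F} (hA : ∀ i j, i ≠ j → 0 ≤ A i j)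
    (hAG : ∀ i j, G.Adj i j → 0 < A i j) (hp : p.IsPath) (x : V → F) :
    (x u - x v) ^ 2 ≤
      (∑ k ∈ range p.length, (A (p.getVert k) (p.getVert (k + 1)))⁻¹) * dirichletEnergy A x := by
  have hpos : ∀ k ∈ range p.length, 0 < A (p.getVert k) (p.getVert (k + 1)) :=
    fun k hk ↦ hAG _ _ (p.adj_getVert_succ (mem_range.1 hk))
  have htelescope : x u - x v =
      ∑ k ∈ range p.length, (x (p.getVert k) - x (p.getVert (k + 1))) := by
    rw [sum_range_sub' fun k ↦ x (p.getVert k), p.getVert_zero, p.getVert_length]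
  calc (x u - x v) ^ 2
      ≤ (∑ k ∈ range p.length, (A (p.getVert k) (p.getVert (k + 1)))⁻¹) *
          ∑ k ∈ range p.length, A (p.getVert k) (p.getVert (k + 1)) *
            (x (p.getVert k) - x (p.getVert (k + 1))) ^ 2 := by
        rw [htelescope]
        refine sum_sq_le_sum_mul_sum_of_sq_le_mul _ (fun k hk ↦ (inv_pos.2 (hpos k hk)).le)
          (fun k hk ↦ mul_nonneg (hpos k hk).le (sq_nonneg _)) fun k hk ↦ ?_
        rw [inv_mul_cancel_left₀ (hpos k hk).ne']
    _ ≤ _ := mul_le_mul_of_nonneg_left (sum_getVert_le_dirichletEnergy hA hp x)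
        (sum_nonneg fun k hk ↦ (inv_pos.2 (hpos k hk)).le)

end DirichletEnergy

section Geodesic

variable {V : Type*} {G : SimpleGraph V} {u v : V}

lemma dist_getVert_of_length_eq_dist {p : G.Walk u v} (hp : p.length = G.dist u v) {k : ℕ}
    (hk : k ≤ p.length) : G.dist u (p.getVert k) = k := by
  rw [← SimpleGraph.length_eq_dist_of_subwalk hp (p.isSubwalk_take k), p.take_length,
    min_eq_left hk]

variable [Fintype V] [DecidableRel G.Adj]

lemma sum_degree_le_of_injOn_dist {s : Finset V} (hs : Set.InjOn (G.dist u) s) :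
    ∑ i ∈ s, G.degree i ≤ 3 * Fintype.card V := by
  classical
  have hnbrs (w : V) : #{i ∈ s | G.Adj i w} ≤ 3 := by
    have hmaps : Set.MapsTo (G.dist u) ({i ∈ s | G.Adj i w} : Finset V)
        (Icc (G.dist u w - 1) (G.dist u w + 1)) := fun i hi ↦ by
      have := (mem_filter.1 hi).2.diff_dist_adj (u := u)
      simp only [coe_Icc, Set.mem_Icc]
      omega
    refine (card_le_card_of_injOn _ hmaps (hs.mono (coe_subset.2 (filter_subset _ _)))).trans ?_
    rw [Nat.card_Icc]
    omega
  calc ∑ i ∈ s, G.degree i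
      = ∑ i ∈ s, #(univ.bipartiteAbove G.Adj i) := by
        simp only [← G.card_neighborFinset_eq_degree, G.neighborFinset_eq_filter, bipartiteAbove]
    _ = ∑ w, #{i ∈ s | G.Adj i w} := sum_card_bipartiteAbove_eq_sum_card_bipartiteBelow G.Adj
    _ ≤ ∑ _w : V, 3 := sum_le_sum fun w _ ↦ hnbrs w
    _ = 3 * Fintype.card V := by simp [mul_comm]

lemma sum_degree_getVert_le {p : G.Walk u v} (hp : p.length = G.dist u v) :
    ∑ k ∈ range (p.length + 1), G.degree (p.getVert k) ≤ 3 * Fintype.card V := by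
  classical
  have hdist : ∀ k ∈ range (p.length + 1), G.dist u (p.getVert k) = k :=
    fun k hk ↦ dist_getVert_of_length_eq_dist hp (mem_range_succ_iff.1 hk)
  have hinj : Set.InjOn p.getVert (range (p.length + 1)) := fun k hk l hl hkl ↦ by
    rw [← hdist k hk, hkl, hdist l hl]
  rw [← sum_image (f := fun i ↦ G.degree i) hinj]
  refine sum_degree_le_of_injOn_dist (u := u) ?_
  rw [coe_image]
  rintro _ ⟨k, hk, rfl⟩ _ ⟨l, hl, rfl⟩ hkl
  rw [← hdist k hk, hkl, hdist l hl]

lemma sum_max_degree_getVert_le {p : G.Walk u v} (hp : p.length = G.dist u v) :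
    ∑ k ∈ range p.length, max (G.degree (p.getVert k)) (G.degree (p.getVert (k + 1))) ≤
      6 * Fintype.card V := by
  have hdeg := sum_degree_getVert_le hp
  have hinit := sum_range_succ (fun k ↦ G.degree (p.getVert k)) p.length
  have htail := sum_range_succ' (fun k ↦ G.degree (p.getVert k)) p.length
  calc _ ≤ ∑ k ∈ range p.length, (G.degree (p.getVert k) + G.degree (p.getVert (k + 1))) :=
        sum_le_sum fun k _ ↦ max_le (Nat.le_add_right _ _) (Nat.le_add_left _ _)
    _ ≤ 6 * Fintype.card V := by
      rw [sum_add_distrib]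
      omega

end Geodesic

section Metropolis

variable {n : ℕ} (G : SimpleGraph (Fin n)) [DecidableRel G.Adj]

lemma metropolis_isSymm : (metropolis G).IsSymm := by
  refine IsSymm.ext fun i j ↦ ?_
  rcases eq_or_ne i j with rfl | hij
  · rfl
  · simp [metropolis, G.adj_comm, max_comm, hij, hij.symm]

variable {G} in
lemma metropolis_apply_of_adj {i j : Fin n} (h : G.Adj i j) :
    metropolis G i j = ((max (G.degree i) (G.degree j) : ℕ) : ℝ)⁻¹ := by
  simp [metropolis, h]

lemma metropolis_nonneg {i j : Fin n} (h : i ≠ j) : 0 ≤ metropolis G i j := by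
  simp only [metropolis, of_apply, if_neg h]
  positivity

variable {G} in
lemma metropolis_pos {i j : Fin n} (h : G.Adj i j) : 0 < metropolis G i j := by
  rw [metropolis_apply_of_adj h, inv_pos, Nat.cast_pos]
  exact lt_max_of_lt_left ((G.degree_pos_iff_exists_adj i).2 ⟨j, h⟩)

lemma metropolis_mulVec_one : metropolis G *ᵥ 1 = 1 := by
  ext i
  have hsplit (j : Fin n) : metropolis G i j =
      (if G.Adj i j then 1 / ((max (G.degree i) (G.degree j) : ℕ) : ℝ) else 0) +
        if i = j then
          1 - ∑ k ∈ G.neighborFinset i, 1 / ((max (G.degree i) (G.degree k) : ℕ) : ℝ)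
        else 0 := by
    rcases eq_or_ne i j with rfl | hij <;> simp [metropolis, *]
  simp [mulVec, dotProduct_one, hsplit, sum_add_distrib, ← sum_filter, G.neighborFinset_eq_filter]

lemma dotProduct_metropolis_mulVec_self (x : Fin n → ℝ) :
    x ⬝ᵥ metropolis G *ᵥ x = x ⬝ᵥ x - dirichletEnergy (metropolis G) x / 2 := by
  have h := two_mul_dotProduct_mulVec_self (metropolis_isSymm G) x
  simp only [metropolis_mulVec_one, Pi.one_apply, one_mul] at h
  have hxx : x ⬝ᵥ x = ∑ i, x i ^ 2 := by simp only [dotProduct, sq]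
  linarith

variable {G}

lemma sq_sub_le_dirichletEnergy_metropolis (hG : G.Connected) (x : Fin n → ℝ) (u v : Fin n) :
    (x u - x v) ^ 2 ≤ 6 * n * dirichletEnergy (metropolis G) x := by
  obtain ⟨p, hpath, hp⟩ := hG.exists_path_of_dist u v
  have hresistance : ∑ k ∈ range p.length,
      (metropolis G (p.getVert k) (p.getVert (k + 1)))⁻¹ ≤ 6 * n := by
    calc _ = ∑ k ∈ range p.length,
          ((max (G.degree (p.getVert k)) (G.degree (p.getVert (k + 1))) : ℕ) : ℝ) :=
          sum_congr rfl fun k hk ↦ by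
            rw [metropolis_apply_of_adj (p.adj_getVert_succ (mem_range.1 hk)), inv_inv]
      _ ≤ 6 * n := mod_cast (sum_max_degree_getVert_le hp).trans_eq (by rw [Fintype.card_fin])
  exact (sq_sub_le_resistance_mul_dirichletEnergy (fun _ _ ↦ metropolis_nonneg G)
    (fun _ _ ↦ metropolis_pos) hpath x).trans
      (mul_le_mul_of_nonneg_right hresistance
        (dirichletEnergy_nonneg (fun _ _ ↦ metropolis_nonneg G) x))

lemma dotProduct_self_le_dirichletEnergy_metropolis (hG : G.Connected) {x : Fin n → ℝ}
    (hx : ∑ i, x i = 0) : x ⬝ᵥ x ≤ 3 * n ^ 2 * dirichletEnergy (metropolis G) x := by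
  have h := two_mul_dotProduct_self_le hx (sq_sub_le_dirichletEnergy_metropolis hG x)
  rw [Fintype.card_fin] at h
  linarith

lemma dotProduct_lazyMetropolis_mulVec_self_le (hG : G.Connected) {x : Fin n → ℝ}
    (hx : ∑ i, x i = 0) :
    x ⬝ᵥ lazyMetropolis G *ᵥ x ≤ (1 - 1 / (12 * (n : ℝ) ^ 2)) * (x ⬝ᵥ x) := by
  have hn : (0 : ℝ) < n := by
    have := hG.nonempty
    exact_mod_cast Fin.pos_iff_nonempty.2 this
  have hlazy : x ⬝ᵥ lazyMetropolis G *ᵥ x =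
      x ⬝ᵥ x - dirichletEnergy (metropolis G) x / 4 := by
    rw [lazyMetropolis, smul_mulVec, add_mulVec, one_mulVec, dotProduct_smul, dotProduct_add,
      dotProduct_metropolis_mulVec_self, smul_eq_mul]
    ring
  have hgap : 1 / (12 * (n : ℝ) ^ 2) * (x ⬝ᵥ x) ≤ dirichletEnergy (metropolis G) x / 4 := by
    rw [one_div_mul_eq_div, div_le_iff₀ (by positivity)]
    linarith [dotProduct_self_le_dirichletEnergy_metropolis hG hx]
  rw [hlazy, sub_mul, one_mul]
  exact sub_le_sub_left hgap _

end Metropolis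

/-- For any connected graph on `n ≥ 2` vertices, the second largest eigenvalue of the lazy
Metropolis gossiping matrix `W̄_{P^m} = (1 − 1/n) I + (1/n) M̃` is at most `1 − 1/(71 n³)`. -/
theorem stmt18 (n : ℕ) (hn : 2 ≤ n) (G : SimpleGraph (Fin n)) [DecidableRel G.Adj]
    (hconn : G.Connected)
    (Wm : Matrix (Fin n) (Fin n) ℝ)
    (hWm : Wm = (1 - 1 / (n : ℝ)) • (1 : Matrix (Fin n) (Fin n) ℝ)
      + (1 / (n : ℝ)) • lazyMetropolis G) :
    ∀ μ : Fin n → ℝ, Monotone μ →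
      Wm.charpoly = ∏ i : Fin n, (Polynomial.X - Polynomial.C (μ i)) →
      μ ⟨n - 2, by omega⟩ ≤ 1 - 1 / (71 * (n : ℝ) ^ 3) := by
  intro μ hμ hch
  have hsymm : Wm.IsSymm := by
    rw [hWm, lazyMetropolis]
    exact (isSymm_one.smul _).add (((isSymm_one.add (metropolis_isSymm G)).smul _).smul _)
  refine eigenvalue_le_of_forall_dotProduct_eq_zero hsymm hμ hch (v := 1) (fun x hx ↦ ?_)
    (by simp only; omega)
  rw [one_dotProduct] at hx
  calc x ⬝ᵥ Wm *ᵥ x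
      = (1 - 1 / (n : ℝ)) * (x ⬝ᵥ x) + 1 / n * (x ⬝ᵥ lazyMetropolis G *ᵥ x) := by
        simp only [hWm, add_mulVec, smul_mulVec, one_mulVec, dotProduct_add, dotProduct_smul,
          smul_eq_mul]
    _ ≤ (1 - 1 / (n : ℝ)) * (x ⬝ᵥ x) + 1 / n * ((1 - 1 / (12 * (n : ℝ) ^ 2)) * (x ⬝ᵥ x)) := by
        gcongr
        exact dotProduct_lazyMetropolis_mulVec_self_le hconn hx
    _ = (1 - 1 / (12 * (n : ℝ) ^ 3)) * (x ⬝ᵥ x) := by field_simp; ring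
    _ ≤ (1 - 1 / (71 * (n : ℝ) ^ 3)) * (x ⬝ᵥ x) := by
        gcongr
        · exact dotProduct_self_star_nonneg x
        · norm_num
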